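/- Let n ≥ 4, let L be one of W(n), S(n), or (for n even) S̃(n) over ℂ, let H_L be the standard Cartan subalgebra of L, and let f ∈ BDer(L)_ε be a super-biderivation of weight ε ∈ H_L^*. If ε ≠ 0, then f is the zero map. -/

import Mathlib

open scoped BigOperators

noncomputable section

namespace CartanSuper

/-- Coordinates of the exterior algebra `Λ(n)` with respect to the monomial basis
`{x_S : S ⊆ {1,…,n}}`. -/
abbrev Lambda (n : ℕ) := Finset (Fin n) → ℂ

/-- Endomorphism algebra of `Λ(n)`. -/
abbrev E (n : ℕ) := Module.End ℂ (Lambda n)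

variable (n : ℕ)

/-- `(−1)^k`. -/
def msign (k : ℕ) : ℂ := (-1 : ℂ) ^ k

/-- The basis monomial `x_S = x_{i₁}⋯x_{i_k}` (indices in increasing order). -/
def mono (S : Finset (Fin n)) : Lambda n := fun T => if T = S then 1 else 0

/-- Number of inversions between `S` and `T`. -/
def inversions (S T : Finset (Fin n)) : ℕ := ((S ×ˢ T).filter fun p => p.2 < p.1).card

/-- The multiplication of `Λ(n)` in coordinates:
`x_S · x_T = (−1)^{inversions} x_{S ∪ T}` for disjoint `S, T` and `0` otherwise. -/
def lmulFun (f g : Lambda n) : Lambda n :=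
  fun U => ∑ S ∈ U.powerset, msign (inversions n S (U \ S)) * f S * g (U \ S)

/-- Left multiplication by an element of `Λ(n)`, as a linear map `Λ(n) →ₗ End Λ(n)`. -/
def mulOp : Lambda n →ₗ[ℂ] E n where
  toFun f :=
    { toFun := lmulFun n f
      map_add' := by
        intro g h; funext U
        simp [lmulFun, mul_add, Finset.sum_add_distrib]
      map_smul' := by
        intro c g; funext U
        simp only [lmulFun, Pi.smul_apply, smul_eq_mul, RingHom.id_apply, Finset.mul_sum]
        exact Finset.sum_congr rfl (by intros; ring) }
  map_add' := by
    intro f g; apply LinearMap.ext; intro h; funext U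
    show lmulFun n (f + g) h U = lmulFun n f h U + lmulFun n g h U
    simp only [lmulFun]
    rw [← Finset.sum_add_distrib]
    exact Finset.sum_congr rfl (by intros; simp [Pi.add_apply]; ring)
  map_smul' := by
    intro c f; apply LinearMap.ext; intro h; funext U
    show lmulFun n (c • f) h U = (c • lmulFun n f h) U
    simp only [lmulFun, Pi.smul_apply, smul_eq_mul, Finset.mul_sum]
    exact Finset.sum_congr rfl (by intros; ring)

/-- The superderivation `∂_i` of `Λ(n)`, in coordinates. -/
def pd (i : Fin n) : E n where
  toFun f := fun S =>
    if i ∈ S then 0 else msign (S.filter (· < i)).card * f (insert i S)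
  map_add' := by
    intro f g; funext S; by_cases h : i ∈ S <;> simp [h, mul_add]
  map_smul' := by
    intro c f; funext S; by_cases h : i ∈ S <;> simp [h] <;> ring

/-- The parity operator `σ` of `Λ(n)`: `σ(x_S) = (−1)^{|S|} x_S`. -/
def par : E n where
  toFun f := fun S => msign S.card * f S
  map_add' := by intro f g; funext S; simp [mul_add]
  map_smul' := by intro c f; funext S; simp; ring

/-- The super-commutator `[D,F] = D∘F − (−1)^{|D||F|} F∘D`, extended bilinearly to all of
`End Λ(n)` using the parity operator `σ`
(for homogeneous `D`, `σ∘D∘σ = (−1)^{|D|} D`). -/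
def sbFun (D F : E n) : E n :=
  D * F - (2:ℂ)⁻¹ • ((F + par n * F * par n) * D + (F - par n * F * par n) * (par n * D * par n))

/-- The super-commutator as a bilinear map. -/
def sbL : E n →ₗ[ℂ] E n →ₗ[ℂ] E n :=
  LinearMap.mk₂ ℂ (sbFun n)
    (fun D D' F => by
      simp only [sbFun, add_mul, sub_mul, mul_add, mul_sub, smul_mul_assoc, mul_smul_comm,
        smul_add, smul_sub]
      module)
    (fun c D F => by
      simp only [sbFun, add_mul, sub_mul, mul_add, mul_sub, smul_mul_assoc, mul_smul_comm,
        smul_add, smul_sub]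
      module)
    (fun D F F' => by
      simp only [sbFun, add_mul, sub_mul, mul_add, mul_sub, smul_mul_assoc, mul_smul_comm,
        smul_add, smul_sub]
      module)
    (fun c D F => by
      simp only [sbFun, add_mul, sub_mul, mul_add, mul_sub, smul_mul_assoc, mul_smul_comm,
        smul_add, smul_sub]
      module)

/-- Shorthand for the super-commutator. -/
def sb (D F : E n) : E n := sbL n D F

/-- The ℤ₂-homogeneous component of `Λ(n)` of parity `p`. -/
def lpar (p : ZMod 2) : Submodule ℂ (Lambda n) where
  carrier := {f | ∀ S : Finset (Fin n), (S.card : ZMod 2) ≠ p → f S = 0}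
  add_mem' := by intro f g hf hg S hS; simp [Pi.add_apply, hf S hS, hg S hS]
  zero_mem' := by intro S hS; rfl
  smul_mem' := by intro c f hf S hS; simp [Pi.smul_apply, hf S hS]

/-- The ℤ-homogeneous component of `Λ(n)` of degree `m` (zero unless `0 ≤ m ≤ n`). -/
def ldeg (m : ℤ) : Submodule ℂ (Lambda n) where
  carrier := {f | ∀ S : Finset (Fin n), (S.card : ℤ) ≠ m → f S = 0}
  add_mem' := by intro f g hf hg S hS; simp [Pi.add_apply, hf S hS, hg S hS]
  zero_mem' := by intro S hS; rfl
  smul_mem' := by intro c f hf S hS; simp [Pi.smul_apply, hf S hS]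

/-- Endomorphisms of `Λ(n)` that are ℤ₂-homogeneous of parity `p`. -/
def epar (p : ZMod 2) : Submodule ℂ (E n) where
  carrier := {D | ∀ (q : ZMod 2), ∀ f ∈ lpar n q, D f ∈ lpar n (q + p)}
  add_mem' := by
    intro D F hD hF q f hf
    simpa [LinearMap.add_apply] using (lpar n (q + p)).add_mem (hD q f hf) (hF q f hf)
  zero_mem' := by intro q f hf; simpa using (lpar n (q + p)).zero_mem
  smul_mem' := by
    intro c D hD q f hf
    simpa [LinearMap.smul_apply] using (lpar n (q + p)).smul_mem c (hD q f hf)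

/-- Endomorphisms of `Λ(n)` that are ℤ-homogeneous of degree `d`. -/
def edeg (d : ℤ) : Submodule ℂ (E n) where
  carrier := {D | ∀ (m : ℤ), ∀ f ∈ ldeg n m, D f ∈ ldeg n (m + d)}
  add_mem' := by
    intro D F hD hF m f hf
    simpa [LinearMap.add_apply] using (ldeg n (m + d)).add_mem (hD m f hf) (hF m f hf)
  zero_mem' := by intro m f hf; simpa using (ldeg n (m + d)).zero_mem
  smul_mem' := by
    intro c D hD m f hf
    simpa [LinearMap.smul_apply] using (ldeg n (m + d)).smul_mem c (hD m f hf)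

/-- The linear map `(f₁,…,f_n) ↦ ∑ᵢ fᵢ ∂ᵢ`. -/
def Wmap : (Fin n → Lambda n) →ₗ[ℂ] E n where
  toFun F := ∑ i, mulOp n (F i) * pd n i
  map_add' := by
    intro F G
    simp only [Pi.add_apply, map_add, add_mul, Finset.sum_add_distrib]
  map_smul' := by
    intro c F
    simp only [RingHom.id_apply, Pi.smul_apply, map_smul, smul_mul_assoc, Finset.smul_sum]

/-- The divergence `(f₁,…,f_n) ↦ ∑ᵢ ∂ᵢ(fᵢ)`. -/
def divMap : (Fin n → Lambda n) →ₗ[ℂ] Lambda n where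
  toFun F := ∑ i, pd n i (F i)
  map_add' := by
    intro F G
    simp only [Pi.add_apply, map_add, Finset.sum_add_distrib]
  map_smul' := by
    intro c F
    simp only [RingHom.id_apply, Pi.smul_apply, map_smul, Finset.smul_sum]

/-- The Witt type Lie superalgebra `W(n) = {∑ fᵢ∂ᵢ : fᵢ ∈ Λ(n)}`. -/
def Wn : Submodule ℂ (E n) := LinearMap.range (Wmap n)

/-- Divergence-free coefficient tuples. -/
def divFree : Submodule ℂ (Fin n → Lambda n) := LinearMap.ker (divMap n)

/-- The special type Lie superalgebra `S(n) = {∑ fᵢ∂ᵢ : ∑ ∂ᵢ(fᵢ) = 0}`. -/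
def Sn : Submodule ℂ (E n) := (divFree n).map (Wmap n)

/-- The top monomial `ω = x₁x₂⋯x_n`. -/
def omegaTop : Lambda n := mono n Finset.univ

/-- `1 − x₁x₂⋯x_n`. -/
def oneM : Lambda n := mono n ∅ - omegaTop n

/-- Multiplication of every coefficient by `1 − x₁⋯x_n`. -/
def oneMScale : (Fin n → Lambda n) →ₗ[ℂ] (Fin n → Lambda n) :=
  LinearMap.pi fun i => (mulOp n (oneM n)) ∘ₗ LinearMap.proj i

/-- The Lie superalgebra `S̃(n) = {(1−x₁⋯x_n)∑ fᵢ∂ᵢ : ∑ ∂ᵢ(fᵢ) = 0}` (`n` even). -/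
def Stn : Submodule ℂ (E n) := (divFree n).map (Wmap n ∘ₗ oneMScale n)

/-- The conjugate index `i'`. -/
def cidx (i : Fin n) : Fin n :=
  ⟨if i.val < n / 2 then i.val + n / 2 else if i.val < 2 * (n / 2) then i.val - n / 2 else i.val,
   by have := i.isLt; split_ifs <;> omega⟩

/-- The linear map `f ↦ D_H(f) = (−1)^{|f|} ∑ᵢ ∂ᵢ(f)∂_{i'}` (the sign is implemented by the
parity operator `σ`, so that this is a single linear map agreeing with `D_H` on homogeneous
elements). -/
def DHmap : Lambda n →ₗ[ℂ] E n where
  toFun f := ∑ i, mulOp n (pd n i (par n f)) * pd n (cidx n i)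
  map_add' := by
    intro f g
    simp only [map_add, add_mul, Finset.sum_add_distrib]
  map_smul' := by
    intro c f
    simp only [RingHom.id_apply, map_smul, smul_mul_assoc, Finset.smul_sum]

/-- Evaluation of the top coefficient. -/
def evalTop : Lambda n →ₗ[ℂ] ℂ := LinearMap.proj Finset.univ

/-- The Hamiltonian Lie superalgebra `H(n) = {D_H(f) : f ∈ ⊕_{i=0}^{n−1} Λ(n)_i}`. -/
def Hn : Submodule ℂ (E n) := (LinearMap.ker (evalTop n)).map (DHmap n)

/-- `H̃(n) = {D_H(f) : f ∈ Λ(n)}`. -/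
def HtN : Submodule ℂ (E n) := LinearMap.range (DHmap n)

/-- The degree derivation `𝒞 = ∑ᵢ xᵢ∂ᵢ`. -/
def CC : E n := ∑ i, mulOp n (mono n {i}) * pd n i

/-- The span of the diagonal elements `xᵢ∂ᵢ`. -/
def diagSpan : Submodule ℂ (E n) :=
  Submodule.span ℂ (Set.range fun i : Fin n => mulOp n (mono n {i}) * pd n i)

/-- The four families of Cartan type Lie superalgebras. -/
inductive CT | W | S | St | H
deriving DecidableEq

/-- Validity of the parameter `n` for each family. -/
def CT.valid : CT → ℕ → Prop
  | .W, n => 4 ≤ n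
  | .S, n => 4 ≤ n
  | .St, n => 4 ≤ n ∧ Even n
  | .H, n => 4 < n

/-- The Cartan type Lie superalgebra `L` itself. -/
def CT.algebra : CT → (n : ℕ) → Submodule ℂ (E n)
  | .W, n => Wn n
  | .S, n => Sn n
  | .St, n => Stn n
  | .H, n => Hn n

/-- The extended algebra `L'`: `L' = L` for `W(n)` and `S̃(n)`, `L' = S(n) ⊕ ℂ𝒞` for `S(n)`,
and `L' = H̃(n) ⊕ ℂ𝒞` for `H(n)`. -/
def CT.prime : CT → (n : ℕ) → Submodule ℂ (E n)
  | .W, n => Wn n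
  | .S, n => Sn n ⊔ Submodule.span ℂ {CC n}
  | .St, n => Stn n
  | .H, n => HtN n ⊔ Submodule.span ℂ {CC n}

/-- The top degree `ξ_L` of the ℤ-grading. -/
def CT.xi : CT → (n : ℕ) → ℤ
  | .W, n => (n : ℤ) - 1
  | .S, n => (n : ℤ) - 2
  | .St, n => (n : ℤ) - 2
  | .H, n => (n : ℤ) - 3

/-- The ℤ-grading component `L_j = L ∩ W(n)_j`; for `S̃(n)` the component of degree `−1`
is `span{(1−x₁⋯x_n)∂ᵢ}` instead. -/
def CT.grade (t : CT) (n : ℕ) (j : ℤ) : Submodule ℂ (E n) :=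
  match t with
  | .St =>
      if j = -1 then
        Submodule.span ℂ (Set.range fun i : Fin n => mulOp n (oneM n) * pd n i)
      else Stn n ⊓ edeg n j
  | t => t.algebra n ⊓ edeg n j

/-- The ℤ-grading component `L'_j` of the extended algebra `L'`. -/
def CT.grade' (t : CT) (n : ℕ) (j : ℤ) : Submodule ℂ (E n) :=
  match t with
  | .St => CT.grade .St n j
  | t => t.prime n ⊓ edeg n j

/-- The standard Cartan subalgebra `H_L` of `L`: the part of the diagonal
`span{xᵢ∂ᵢ}` lying in `L`. -/
def CT.cartan (t : CT) (n : ℕ) : Submodule ℂ (E n) := t.algebra n ⊓ diagSpan n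

/-- The weight space of `M ⊆ End Λ(n)` of weight `μ ∈ H_L^*` under the adjoint action
of the standard Cartan subalgebra of `L`. -/
def wtsp (t : CT) (n : ℕ) (M : Submodule ℂ (E n)) (μ : Module.Dual ℂ (t.cartan n)) :
    Submodule ℂ (E n) where
  carrier := {x | x ∈ M ∧ ∀ h : t.cartan n, sbL n h x = μ h • x}
  add_mem' := by
    rintro x y ⟨hx, hx'⟩ ⟨hy, hy'⟩
    exact ⟨M.add_mem hx hy, fun h => by simp [map_add, hx' h, hy' h, smul_add]⟩
  zero_mem' := ⟨M.zero_mem, fun h => by simp⟩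
  smul_mem' := by
    rintro c x ⟨hx, hx'⟩
    exact ⟨M.smul_mem c hx, fun h => by simp [map_smul, hx' h, smul_comm c]⟩

/-- The set of roots of `M` with respect to the standard Cartan subalgebra of `L`:
the nonzero weights with nonzero weight space. -/
def CT.roots (t : CT) (n : ℕ) (M : Submodule ℂ (E n)) : Set (Module.Dual ℂ (t.cartan n)) :=
  {ε | ε ≠ 0 ∧ wtsp t n M ε ≠ ⊥}

/-- The sign `(−1)^p` for `p ∈ ℤ₂`. -/
def sgn (p : ZMod 2) : ℂ := (-1 : ℂ) ^ p.val

/-- `f` is a super-biderivation of `L` of ℤ₂-degree `pf`: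
a bilinear map with `f(L_α, L_β) ⊆ L_{α+β+pf}` satisfying
`f([x,y],z) = (−1)^{|x||f|}[x,f(y,z)] + (−1)^{|y||z|}[f(x,z),y]` and
`f(x,[y,z]) = [f(x,y),z] + (−1)^{(|f|+|x|)|y|}[y,f(x,z)]` for homogeneous `x,y,z ∈ L`.
(The bilinear map is given as a bilinear map on the ambient space `End Λ(n)`;
only its restriction to `L` is relevant.) -/
structure IsSuperBider (L : Submodule ℂ (E n)) (pf : ZMod 2)
    (f : E n →ₗ[ℂ] E n →ₗ[ℂ] E n) : Prop where
  maps : ∀ (α β : ZMod 2), ∀ x ∈ L ⊓ epar n α, ∀ y ∈ L ⊓ epar n β,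
    f x y ∈ L ⊓ epar n (α + β + pf)
  eq1 : ∀ (α β γ : ZMod 2), ∀ x ∈ L ⊓ epar n α, ∀ y ∈ L ⊓ epar n β, ∀ z ∈ L ⊓ epar n γ,
    f (sbL n x y) z = sgn (α * pf) • sbL n x (f y z) + sgn (β * γ) • sbL n (f x z) y
  eq2 : ∀ (α β γ : ZMod 2), ∀ x ∈ L ⊓ epar n α, ∀ y ∈ L ⊓ epar n β, ∀ z ∈ L ⊓ epar n γ,
    f x (sbL n y z) = sbL n (f x y) z + sgn ((pf + α) * β) • sbL n y (f x z)

/-- `D` is a superderivation of `L` of ℤ₂-degree `p`: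
`D(L_α) ⊆ L_{α+p}` and `D([x,y]) = [D(x),y] + (−1)^{|D||x|}[x,D(y)]` for homogeneous
`x, y ∈ L`. (Given as a linear map on the ambient space `End Λ(n)`.) -/
structure IsSuperDer (L : Submodule ℂ (E n)) (p : ZMod 2)
    (D : E n →ₗ[ℂ] E n) : Prop where
  maps : ∀ (α : ZMod 2), ∀ x ∈ L ⊓ epar n α, D x ∈ L ⊓ epar n (α + p)
  leib : ∀ (α β : ZMod 2), ∀ x ∈ L ⊓ epar n α, ∀ y ∈ L ⊓ epar n β,
    D (sbL n x y) = sbL n (D x) y + sgn (p * α) • sbL n x (D y)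

/-- `f ∈ BDer(L)_ε`: the super-biderivation `f` has weight `ε ∈ H_L^*`, i.e.
`f(L_η, L_ζ) ⊆ L_{ε+η+ζ}` for all weights `η, ζ`. -/
def CT.HasWeight (t : CT) (n : ℕ) (f : E n →ₗ[ℂ] E n →ₗ[ℂ] E n)
    (ε : Module.Dual ℂ (t.cartan n)) : Prop :=
  ∀ (η ζ : Module.Dual ℂ (t.cartan n)),
    ∀ x ∈ wtsp t n (t.algebra n) η, ∀ y ∈ wtsp t n (t.algebra n) ζ,
      f x y ∈ wtsp t n (t.algebra n) (ε + η + ζ)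

/-- `f ∈ BDer(L)_i`: the super-biderivation `f` has ℤ-degree `i`, i.e.
`f(L_j, L_k) ⊆ L_{i+j+k}` for all `j, k ∈ ℤ`. -/
def CT.HasDeg (t : CT) (n : ℕ) (f : E n →ₗ[ℂ] E n →ₗ[ℂ] E n) (i : ℤ) : Prop :=
  ∀ (j k : ℤ), ∀ x ∈ t.grade n j, ∀ y ∈ t.grade n k, f x y ∈ t.grade n (i + j + k)

lemma E_neg_mul {n : ℕ} (a b : E n) : -a*b = -(a*b) := neg_mul a b
lemma E_mul_neg {n : ℕ} (a b : E n) : a*(-b) = -(a*b) := mul_neg a b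

/-- sign of moving `x_i` into place. -/
def sg {n : ℕ} (i : Fin n) (S : Finset (Fin n)) : ℂ := msign (S.filter (· < i)).card

/-- elementary sign -/
def ls {n : ℕ} (i j : Fin n) : ℂ := if i < j then -1 else 1

lemma sg_insert {n : ℕ} (i j : Fin n) (S : Finset (Fin n)) (h : i ∉ S) :
    sg j (insert i S) = ls i j * sg j S := by
  unfold sg ls msign
  rw [Finset.filter_insert]
  split_ifs with hij
  · rw [Finset.card_insert_of_notMem (by simp [h]), pow_succ]; ring
  · simp

lemma ls_sq {n : ℕ} (i j : Fin n) : ls i j * ls i j = 1 := by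
  unfold ls; split_ifs <;> norm_num

lemma sg_sq {n : ℕ} (i : Fin n) (S : Finset (Fin n)) : sg i S * sg i S = 1 := by
  unfold sg msign
  rw [← mul_pow]; norm_num

lemma ls_swap {n : ℕ} (i j : Fin n) (h : i ≠ j) : ls j i = - ls i j := by
  unfold ls
  rcases lt_trichotomy i j with h1 | h1 | h1
  · simp [h1, h1.not_gt]
  · exact absurd h1 h
  · simp [h1, h1.not_gt]

lemma sg_erase {n : ℕ} (i j : Fin n) (S : Finset (Fin n)) (h : i ∈ S) :
    sg j (S.erase i) = ls i j * sg j S := by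
  have := sg_insert i j (S.erase i) (by simp)
  rw [Finset.insert_erase h] at this
  rw [this, ← mul_assoc, ls_sq, one_mul]

lemma sg_erase_self {n : ℕ} (j : Fin n) (S : Finset (Fin n)) :
    sg j (S.erase j) = sg j S := by
  by_cases h : j ∈ S
  · rw [sg_erase _ _ _ h]; simp [ls]
  · rw [Finset.erase_eq_of_notMem h]

/-- multiplication by `x_i` -/
def X (n : ℕ) (i : Fin n) : E n := mulOp n (mono n {i})

lemma msign_inv_single {n : ℕ} (i : Fin n) (T : Finset (Fin n)) :
    msign (inversions n {i} T) = sg i T := by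
  unfold sg inversions
  congr 1
  rw [Finset.singleton_product]
  rw [Finset.filter_map, Finset.card_map]
  rfl

lemma X_apply (n : ℕ) (i : Fin n) (h : Lambda n) (U : Finset (Fin n)) :
    X n i h U = if i ∈ U then sg i U * h (U.erase i) else 0 := by
  change lmulFun n (mono n {i}) h U = _
  unfold lmulFun
  split_ifs with hi
  · rw [Finset.sum_eq_single {i}]
    · rw [msign_inv_single, Finset.sdiff_singleton_eq_erase, sg_erase_self]
      simp [mono]
    · intro S _ hS; simp [mono, hS]
    · intro hS; simp [hi] at hS
  · apply Finset.sum_eq_zero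
    intro S hS
    have : S ≠ {i} := by rintro rfl; simp [hi] at hS
    simp [mono, this]

lemma P_apply (n : ℕ) (i : Fin n) (h : Lambda n) (U : Finset (Fin n)) :
    pd n i h U = if i ∈ U then 0 else sg i U * h (insert i U) := rfl

lemma par_apply (n : ℕ) (h : Lambda n) (U : Finset (Fin n)) :
    par n h U = msign U.card * h U := rfl

lemma XX (n : ℕ) (i j : Fin n) : X n i * X n j = - (X n j * X n i) := by
  apply LinearMap.ext; intro h; funext U
  simp only [Module.End.mul_apply, LinearMap.neg_apply, Pi.neg_apply, X_apply]
  by_cases hij : i = j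
  · subst hij; simp
  · have hji : j ≠ i := fun h => hij h.symm
    by_cases hi : i ∈ U <;> by_cases hj : j ∈ U <;>
      simp only [hi, hj, Finset.mem_erase, hij, hji, ne_eq, not_false_eq_true, and_true,
        if_true, if_false, and_false, mul_zero, neg_zero]
    rw [sg_erase _ _ _ hi, sg_erase _ _ _ hj, ls_swap i j hij, Finset.erase_right_comm]
    ring

lemma PP (n : ℕ) (i j : Fin n) : pd n i * pd n j = - (pd n j * pd n i) := by
  apply LinearMap.ext; intro h; funext U
  simp only [Module.End.mul_apply, LinearMap.neg_apply, Pi.neg_apply, P_apply]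
  by_cases hij : i = j
  · subst hij; simp
  · have hji : j ≠ i := fun h => hij h.symm
    by_cases hi : i ∈ U <;> by_cases hj : j ∈ U <;>
      simp only [hi, hj, Finset.mem_insert, hij, hji, or_self, or_true, or_false,
        if_true, if_false, mul_zero, neg_zero]
    rw [sg_insert _ _ _ hi, sg_insert _ _ _ hj, ls_swap i j hij, Finset.insert_comm]
    ring

lemma PX_self (n : ℕ) (i : Fin n) : pd n i * X n i = 1 - X n i * pd n i := by
  apply LinearMap.ext; intro h; funext U
  simp only [Module.End.mul_apply, LinearMap.sub_apply, Pi.sub_apply, P_apply, X_apply,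
    Module.End.one_apply]
  by_cases hi : i ∈ U
  · simp only [hi, if_true, Finset.mem_erase, ne_eq, not_true, false_and, if_false]
    rw [sg_erase_self, ← mul_assoc, sg_sq, Finset.insert_erase hi]; ring
  · simp only [hi, if_false, Finset.mem_insert_self, if_true]
    rw [sg_insert _ _ _ hi, Finset.erase_insert hi]
    have := sg_sq i U
    simp only [ls, lt_irrefl, if_false, one_mul, sub_zero]
    rw [← mul_assoc, this, one_mul]

lemma PX_ne (n : ℕ) (i j : Fin n) (hij : i ≠ j) : pd n i * X n j = - (X n j * pd n i) := by
  have hji : j ≠ i := fun h => hij h.symm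
  apply LinearMap.ext; intro h; funext U
  simp only [Module.End.mul_apply, LinearMap.neg_apply, Pi.neg_apply, P_apply, X_apply]
  by_cases hi : i ∈ U <;> by_cases hj : j ∈ U <;>
      simp only [hi, hj, Finset.mem_insert, Finset.mem_erase, ne_eq, hij, hji, or_self, or_true,
        or_false, not_false_eq_true, true_and, and_true, and_false,
        if_true, if_false, mul_zero, neg_zero]
  rw [sg_insert _ _ _ hi, sg_erase _ _ _ hj, ls_swap i j hij,
    Finset.erase_insert_of_ne hij]
  ring

lemma msign_succ (k : ℕ) : msign (k+1) = - msign k := by unfold msign; rw [pow_succ]; ring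

lemma parX (n : ℕ) (i : Fin n) : par n * X n i = - (X n i * par n) := by
  apply LinearMap.ext; intro h; funext U
  simp only [Module.End.mul_apply, LinearMap.neg_apply, Pi.neg_apply, par_apply, X_apply]
  split_ifs with hi
  · rw [← Finset.card_erase_add_one hi, msign_succ]; ring
  · simp

lemma parP (n : ℕ) (i : Fin n) : par n * pd n i = - (pd n i * par n) := by
  apply LinearMap.ext; intro h; funext U
  simp only [Module.End.mul_apply, LinearMap.neg_apply, Pi.neg_apply, par_apply, P_apply]
  split_ifs with hi
  · simp
  · rw [Finset.card_insert_of_notMem hi, msign_succ]; ring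

lemma parpar (n : ℕ) : par n * par n = 1 := by
  apply LinearMap.ext; intro h; funext U
  simp only [Module.End.mul_apply, par_apply, Module.End.one_apply]
  rw [← mul_assoc]; unfold msign; rw [← mul_pow]; norm_num

lemma inv_insert {n : ℕ} (i : Fin n) (S T : Finset (Fin n)) (h : i ∉ S) :
    msign (inversions n (insert i S) T) = sg i T * msign (inversions n S T) := by
  rw [← msign_inv_single]
  unfold msign
  rw [← pow_add]
  congr 1
  unfold inversions
  rw [Finset.insert_eq, Finset.union_product, Finset.filter_union, Finset.card_union_of_disjoint]
  rw [Finset.disjoint_left]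
  rintro ⟨a, b⟩ h1 h2
  simp only [Finset.mem_filter, Finset.mem_product, Finset.mem_singleton] at h1 h2
  exact h (h1.1.1 ▸ h2.1.1)

lemma sg_union {n : ℕ} (i : Fin n) (S T : Finset (Fin n)) (h : Disjoint S T) :
    sg i (S ∪ T) = sg i S * sg i T := by
  unfold sg msign
  rw [← pow_add, Finset.filter_union, Finset.card_union_of_disjoint]
  exact Finset.disjoint_filter_filter h

lemma mul_X (n : ℕ) (i : Fin n) (g : Lambda n) : mulOp n (X n i g) = X n i * mulOp n g := by
  apply LinearMap.ext; intro h; funext U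
  rw [Module.End.mul_apply, X_apply]
  change lmulFun n (X n i g) h U = if i ∈ U then sg i U * lmulFun n g h (U.erase i) else 0
  unfold lmulFun
  split_ifs with hi
  · obtain ⟨V, hiV, rfl⟩ : ∃ V, i ∉ V ∧ insert i V = U :=
      ⟨U.erase i, by simp, Finset.insert_erase hi⟩
    rw [Finset.erase_insert hiV]
    rw [Finset.sum_powerset_insert hiV, Finset.mul_sum]
    rw [Finset.sum_eq_zero, zero_add]
    · apply Finset.sum_congr rfl
      intro S hS
      have hS' := Finset.mem_powerset.1 hS
      have hiS : i ∉ S := fun h => hiV (hS' h)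
      rw [X_apply, if_pos (Finset.mem_insert_self _ _), inv_insert _ _ _ hiS,
        Finset.erase_insert hiS, Finset.insert_sdiff_insert,
        Finset.sdiff_insert_of_notMem hiV, sg_insert _ _ _ hiS, sg_insert _ _ _ hiV]
      have : sg i V = sg i S * sg i (V \ S) := by
        rw [← sg_union _ _ _ Finset.disjoint_sdiff, Finset.union_sdiff_of_subset hS']
      rw [this]; ring
    · intro S hS
      have hS' := Finset.mem_powerset.1 hS
      have hiS : i ∉ S := fun h => hiV (hS' h)
      rw [X_apply, if_neg hiS]; ring
  · apply Finset.sum_eq_zero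
    intro S hS
    have hS' := Finset.mem_powerset.1 hS
    have hiS : i ∉ S := fun h => hi (hS' h)
    rw [X_apply, if_neg hiS]; ring

lemma mul_one' (n : ℕ) : mulOp n (mono n ∅) = 1 := by
  apply LinearMap.ext; intro h; funext U
  change lmulFun n _ h U = h U
  unfold lmulFun
  rw [Finset.sum_eq_single ∅]
  · simp [mono, inversions, msign]
  · intro S _ hS; simp [mono, hS]
  · simp

lemma X_mono (n : ℕ) (i : Fin n) (S : Finset (Fin n)) (h : i ∉ S) :
    X n i (mono n S) = sg i S • mono n (insert i S) := by
  funext U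
  rw [X_apply]
  simp only [mono, Pi.smul_apply, smul_eq_mul]
  by_cases hU : U = insert i S
  · subst hU
    simp [Finset.erase_insert h, sg_insert _ _ _ h, ls]
  · simp only [hU, if_false, mul_zero]
    split_ifs with h1 h2
    · exact absurd (by rw [← h2, Finset.insert_erase h1]) hU
    · simp
    · rfl

lemma lam_expand (n : ℕ) (g : Lambda n) : g = ∑ S, g S • mono n S := by
  funext U
  simp [mono, Finset.sum_apply]

lemma lam_ind (n : ℕ) (M : Submodule ℂ (Lambda n)) (h1 : mono n ∅ ∈ M)
    (hX : ∀ i, ∀ g ∈ M, X n i g ∈ M) (g : Lambda n) : g ∈ M := by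
  have : ∀ S, mono n S ∈ M := by
    intro S
    induction S using Finset.induction_on with
    | empty => exact h1
    | insert i S hi ih =>
      have := M.smul_mem (sg i S) (hX i _ ih)
      rw [X_mono _ _ _ hi, smul_smul, sg_sq, one_smul] at this
      exact this
  rw [lam_expand n g]
  exact M.sum_mem fun S _ => M.smul_mem _ (this S)

lemma par_one (n : ℕ) : par n (mono n ∅) = mono n ∅ := by
  funext U; rw [par_apply]; unfold mono msign; split_ifs with h <;> simp [h]

lemma P_one (n : ℕ) (i : Fin n) : pd n i (mono n ∅) = 0 := by
  funext U; rw [P_apply]; simp [mono]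

lemma mul_swap_X (n : ℕ) (i : Fin n) (g : Lambda n) :
    mulOp n g * X n i = X n i * mulOp n (par n g) := by
  have := lam_ind n (LinearMap.eqLocus ((LinearMap.mulRight ℂ (X n i)) ∘ₗ mulOp n)
    ((LinearMap.mulLeft ℂ (X n i)) ∘ₗ mulOp n ∘ₗ par n)) ?_ ?_ g
  · simpa using this
  · simp [mul_one', par_one]
  · intro j g hg
    simp only [LinearMap.mem_eqLocus, LinearMap.comp_apply, LinearMap.mulRight_apply,
      LinearMap.mulLeft_apply] at hg ⊢
    have h1 : par n (X n j g) = - X n j (par n g) := by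
      have := LinearMap.congr_fun (parX n j) g
      simpa using this
    rw [h1, map_neg, mul_X, mul_X, mul_assoc, hg, ← mul_assoc, XX, E_neg_mul, E_mul_neg, mul_assoc]

lemma P_mul (n : ℕ) (j : Fin n) (g : Lambda n) :
    pd n j * mulOp n g = mulOp n (pd n j g) + mulOp n (par n g) * pd n j := by
  have := lam_ind n (LinearMap.eqLocus ((LinearMap.mulLeft ℂ (pd n j)) ∘ₗ mulOp n)
    (mulOp n ∘ₗ pd n j + (LinearMap.mulRight ℂ (pd n j)) ∘ₗ mulOp n ∘ₗ par n)) ?_ ?_ g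
  · simpa using this
  · simp [mul_one', par_one, P_one]
  · intro i g hg
    simp only [LinearMap.mem_eqLocus, LinearMap.comp_apply, LinearMap.mulRight_apply,
      LinearMap.mulLeft_apply, LinearMap.add_apply] at hg ⊢
    have h1 : par n (X n i g) = - X n i (par n g) := by
      have := LinearMap.congr_fun (parX n i) g
      simpa using this
    rw [h1, map_neg, mul_X, mul_X, ← mul_assoc]
    by_cases hij : j = i
    · subst hij
      have h2 : pd n j (X n j g) = g - X n j (pd n j g) := by
        have := LinearMap.congr_fun (PX_self n j) g
        simpa using this
      rw [h2, PX_self, map_sub, mul_X, sub_mul, one_mul, mul_assoc, hg]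
      (simp only [E_neg_mul, E_mul_neg, mul_sub, sub_mul, mul_add, add_mul, mul_assoc, mul_zero, one_mul, mul_one, neg_add, neg_sub, sub_zero]; try abel)
    · have h2 : pd n j (X n i g) = - X n i (pd n j g) := by
        have := LinearMap.congr_fun (PX_ne n j i hij) g
        simpa using this
      rw [h2, PX_ne _ _ _ hij, map_neg, mul_X, E_neg_mul, mul_assoc, hg]
      (simp only [E_neg_mul, E_mul_neg, mul_sub, sub_mul, mul_add, add_mul, mul_assoc, mul_zero, one_mul, mul_one, neg_add, neg_sub, sub_zero]; try abel)

lemma par_mul (n : ℕ) (g : Lambda n) :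
    par n * mulOp n g = mulOp n (par n g) * par n := by
  have := lam_ind n (LinearMap.eqLocus ((LinearMap.mulLeft ℂ (par n)) ∘ₗ mulOp n)
    ((LinearMap.mulRight ℂ (par n)) ∘ₗ mulOp n ∘ₗ par n)) ?_ ?_ g
  · simpa using this
  · simp [mul_one', par_one]
  · intro i g hg
    simp only [LinearMap.mem_eqLocus, LinearMap.comp_apply, LinearMap.mulRight_apply,
      LinearMap.mulLeft_apply] at hg ⊢
    have h1 : par n (X n i g) = - X n i (par n g) := by
      have := LinearMap.congr_fun (parX n i) g
      simpa using this
    rw [h1, map_neg, mul_X, mul_X, ← mul_assoc, parX, E_neg_mul, mul_assoc, hg]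
    (simp only [E_neg_mul, E_mul_neg, mul_sub, sub_mul, mul_add, add_mul, mul_assoc, mul_zero, one_mul, mul_one, neg_add, neg_sub, sub_zero]; try abel)

lemma mul_mul' (n : ℕ) (g h : Lambda n) :
    mulOp n (mulOp n g h) = mulOp n g * mulOp n h := by
  have := lam_ind n (LinearMap.eqLocus (mulOp n ∘ₗ (mulOp n).flip h)
    ((LinearMap.mulRight ℂ (mulOp n h)) ∘ₗ mulOp n)) ?_ ?_ g
  · simpa using this
  · simp [mul_one']
  · intro i g hg
    simp only [LinearMap.mem_eqLocus, LinearMap.comp_apply, LinearMap.mulRight_apply,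
      LinearMap.flip_apply] at hg ⊢
    rw [mul_X, mul_assoc, ← hg, Module.End.mul_apply, mul_X]

/-- `[x_i∂_j, g] = (x_i∂_j g)` -/
lemma XP_mul (n : ℕ) (i j : Fin n) (g : Lambda n) :
    X n i * pd n j * mulOp n g = mulOp n (X n i (pd n j g)) + mulOp n g * (X n i * pd n j) := by
  rw [mul_X, ← mul_assoc (mulOp n g), mul_swap_X, mul_assoc, P_mul]
  (simp only [E_neg_mul, E_mul_neg, mul_sub, sub_mul, mul_add, add_mul, mul_assoc, mul_zero, one_mul, mul_one, neg_add, neg_sub, sub_zero]; try abel)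

lemma XP_P (n : ℕ) (i j m : Fin n) :
    X n i * pd n j * pd n m = pd n m * (X n i * pd n j) - (if m = i then pd n j else 0) := by
  split_ifs with h
  · subst h
    rw [← mul_assoc, PX_self, mul_assoc, PP]; (simp only [E_neg_mul, E_mul_neg, mul_sub, sub_mul, mul_add, add_mul, mul_assoc, mul_zero, one_mul, mul_one, neg_add, neg_sub, sub_zero]; try abel)
  · rw [← mul_assoc, PX_ne _ _ _ h, mul_assoc, PP]; (simp only [E_neg_mul, E_mul_neg, mul_sub, sub_mul, mul_add, add_mul, mul_assoc, mul_zero, one_mul, mul_one, neg_add, neg_sub, sub_zero]; try abel)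

/-- coefficients of the bracket with `x_i ∂_j`. -/
def adF (n : ℕ) (i j : Fin n) (F : Fin n → Lambda n) : Fin n → Lambda n :=
  fun m => X n i (pd n j (F m)) - (if m = j then F i else 0)

lemma Wmap_apply (n : ℕ) (F : Fin n → Lambda n) : Wmap n F = ∑ m, mulOp n (F m) * pd n m := rfl

lemma XP_W (n : ℕ) (i j : Fin n) (F : Fin n → Lambda n) :
    X n i * pd n j * Wmap n F - Wmap n F * (X n i * pd n j) = Wmap n (adF n i j F) := by
  have h : ∀ m, X n i * pd n j * (mulOp n (F m) * pd n m) - mulOp n (F m) * pd n m * (X n i * pd n j)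
     = mulOp n (X n i (pd n j (F m))) * pd n m - (if m = i then mulOp n (F m) * pd n j else 0) := by
    intro m
    rw [← mul_assoc, XP_mul, add_mul, mul_assoc (mulOp n (F m)), XP_P]
    split_ifs <;> (simp only [E_neg_mul, E_mul_neg, mul_sub, sub_mul, mul_add, add_mul, mul_assoc, mul_zero, one_mul, mul_one, neg_add, neg_sub, sub_zero]; try abel)
  rw [Wmap_apply, Finset.mul_sum, Finset.sum_mul, ← Finset.sum_sub_distrib,
    Finset.sum_congr rfl (fun m _ => h m), Wmap_apply]
  simp only [adF, map_sub, sub_mul, Finset.sum_sub_distrib]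
  congr 1
  simp only [apply_ite (mulOp n), map_zero, ite_mul, zero_mul]
  simp

lemma div_adF (n : ℕ) (i j : Fin n) (F : Fin n → Lambda n) :
    divMap n (adF n i j F) = X n i (pd n j (divMap n F)) := by
  change ∑ m, pd n m (adF n i j F m) = X n i (pd n j (∑ m, pd n m (F m)))
  simp only [map_sum]
  have h : ∀ m, pd n m (adF n i j F m) = X n i (pd n j (pd n m (F m))) +
     ((if m = i then pd n j (F m) else 0) - (if m = j then pd n m (F i) else 0)) := by
    intro m
    have := LinearMap.congr_fun (XP_P n i j m) (F m)
    simp only [Module.End.mul_apply, LinearMap.sub_apply] at this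
    rw [this]
    unfold adF
    rw [map_sub]
    split_ifs <;> simp [sub_eq_add_neg]
  rw [Finset.sum_congr rfl (fun m _ => h m)]
  simp [Finset.sum_add_distrib]

lemma sgn_nat (k : ℕ) : sgn (k : ZMod 2) = msign k := by
  unfold sgn msign
  rw [ZMod.val_natCast, ← neg_one_pow_eq_pow_mod_two]

lemma sgn_cases (p : ZMod 2) : (p = 0 ∧ sgn p = 1) ∨ (p = 1 ∧ sgn p = -1) := by
  have : p = 0 ∨ p = 1 := by revert p; decide
  rcases this with h | h
  · left; refine ⟨h, ?_⟩; subst h; simp [sgn]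
  · right; refine ⟨h, ?_⟩; subst h; simp [sgn, ZMod.val_one]

lemma sgn_zero : sgn 0 = 1 := by simp [sgn]

lemma sgn_add (p q : ZMod 2) : sgn (p + q) = sgn p * sgn q := by
  rcases sgn_cases p with ⟨rfl, h⟩ | ⟨rfl, h⟩ <;> rcases sgn_cases q with ⟨rfl, h'⟩ | ⟨rfl, h'⟩
  · simp [h]
  · simp [sgn_zero]
  · simp [sgn_zero]
  · rw [h]; rw [show (1:ZMod 2) + 1 = 0 from by decide, sgn_zero]; norm_num

lemma sgn_inj (p q : ZMod 2) (h : sgn p = sgn q) : p = q := by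
  rcases sgn_cases p with ⟨rfl, h1⟩ | ⟨rfl, h1⟩ <;>
    rcases sgn_cases q with ⟨rfl, h'⟩ | ⟨rfl, h'⟩ <;> first | rfl | skip
  · rw [h1, h'] at h; norm_num at h
  · rw [h1, h'] at h; norm_num at h

lemma mem_lpar (n : ℕ) (p : ZMod 2) (f : Lambda n) : f ∈ lpar n p ↔ par n f = sgn p • f := by
  constructor
  · intro h; funext S
    rw [par_apply, Pi.smul_apply, smul_eq_mul, ← sgn_nat]
    by_cases hS : (S.card : ZMod 2) = p
    · rw [hS]
    · rw [h S hS]; simp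
  · intro h S hS
    have := congrFun h S
    rw [par_apply, Pi.smul_apply, smul_eq_mul, ← sgn_nat] at this
    have h2 : (sgn (S.card : ZMod 2) - sgn p) * f S = 0 := by rw [sub_mul, this, sub_self]
    rcases mul_eq_zero.1 h2 with h3 | h3
    · exact absurd (sgn_inj _ _ (sub_eq_zero.1 h3)) hS
    · exact h3

lemma mono_mem_lpar (n : ℕ) (S : Finset (Fin n)) : mono n S ∈ lpar n (S.card : ZMod 2) := by
  intro T hT
  unfold mono
  rw [if_neg]
  rintro rfl; exact hT rfl

lemma mem_epar (n : ℕ) (p : ZMod 2) (D : E n) :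
    D ∈ epar n p ↔ par n * D = sgn p • (D * par n) := by
  constructor
  · intro h
    apply LinearMap.ext; intro g
    rw [lam_expand n g]
    simp only [map_sum, map_smul]
    apply Finset.sum_congr rfl
    intro S _
    congr 1
    have h1 := h _ _ (mono_mem_lpar n S)
    rw [mem_lpar] at h1
    have h2 := mono_mem_lpar n S
    rw [mem_lpar] at h2
    rw [Module.End.mul_apply, LinearMap.smul_apply, Module.End.mul_apply, h1, h2, map_smul,
      smul_smul, sgn_add, mul_comm]
  · intro h q g hg
    rw [mem_lpar] at hg ⊢
    have := LinearMap.congr_fun h g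
    rw [Module.End.mul_apply, LinearMap.smul_apply, Module.End.mul_apply, hg, map_smul,
      smul_smul] at this
    rw [this, sgn_add, mul_comm]

lemma mem_epar_zero (n : ℕ) (D : E n) : D ∈ epar n 0 ↔ par n * D = D * par n := by
  rw [mem_epar, sgn_zero, one_smul]

lemma sbL_apply (n : ℕ) (D F : E n) : sbL n D F =
  D * F - (2:ℂ)⁻¹ • ((F + par n * F * par n) * D + (F - par n * F * par n) * (par n * D * par n)) :=
  rfl

lemma sbL_even_right (n : ℕ) (D u : E n) (hu : par n * u = u * par n) :
    sbL n D u = D * u - u * D := by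
  rw [sbL_apply, hu, mul_assoc, parpar, mul_one, sub_self, zero_mul, add_zero, ← two_smul ℂ u,
    smul_mul_assoc, smul_smul]
  norm_num

lemma sbL_even_left (n : ℕ) (D u : E n) (hu : par n * u = u * par n) :
    sbL n u D = u * D - D * u := by
  rw [sbL_apply, hu, mul_assoc u, parpar, mul_one, ← add_mul]
  have : D + par n * D * par n + (D - par n * D * par n) = (2:ℂ) • D := by
    rw [two_smul]; abel
  rw [this, smul_mul_assoc, smul_smul]
  norm_num

lemma sbL_odd_odd (n : ℕ) (D u : E n) (hu : par n * u = - (u * par n))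
    (hD : par n * D = - (D * par n)) :
    sbL n D u = D * u + u * D := by
  rw [sbL_apply, hu, hD, E_neg_mul, E_neg_mul, mul_assoc, mul_assoc D, parpar, mul_one, mul_one,
    sub_neg_eq_add, add_neg_cancel, zero_mul, zero_add, ← two_smul ℂ u,
    smul_mul_assoc, smul_smul, E_mul_neg]
  norm_num

lemma par_XP (n : ℕ) (i j : Fin n) : par n * (X n i * pd n j) = (X n i * pd n j) * par n := by
  rw [← mul_assoc, parX, E_neg_mul, mul_assoc, parP, E_mul_neg, neg_neg, mul_assoc]

lemma XPself_apply (n : ℕ) (i : Fin n) (g : Lambda n) (U : Finset (Fin n)) :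
    X n i (pd n i g) U = if i ∈ U then g U else 0 := by
  rw [X_apply]
  split_ifs with hi
  · rw [P_apply]
    simp only [Finset.mem_erase, ne_eq, not_true, false_and, if_false]
    rw [sg_erase_self, ← mul_assoc, sg_sq, Finset.insert_erase hi, one_mul]
  · rfl

/-- multiplication by the top monomial -/
def Om (n : ℕ) : E n := mulOp n (omegaTop n)

lemma XP_om_self (n : ℕ) (i : Fin n) : X n i (pd n i (omegaTop n)) = omegaTop n := by
  funext U
  rw [XPself_apply]
  unfold omegaTop mono
  split_ifs with h1 h2 h3
  · rfl
  · rfl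
  · subst h3; simp at h1
  · rfl

lemma XP_om_ne (n : ℕ) (i j : Fin n) (hij : i ≠ j) : X n i (pd n j (omegaTop n)) = 0 := by
  funext U
  rw [X_apply]
  split_ifs with h1
  · rw [P_apply]
    have : insert j (U.erase i) ≠ Finset.univ := by
      intro h
      have := Finset.mem_univ i
      rw [← h] at this
      simp [hij] at this
    simp [omegaTop, mono, this]
  · rfl

lemma X_om (n : ℕ) (i : Fin n) : X n i (omegaTop n) = 0 := by
  rw [← XP_om_self n i, ← Module.End.mul_apply]
  have := XX n i i
  have h2 : X n i * X n i = 0 := by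
    have h3 : (2:ℂ) • (X n i * X n i) = 0 := by
      rw [two_smul]; nth_rewrite 1 [this]; exact neg_add_cancel _
    exact (smul_eq_zero.1 h3).resolve_left two_ne_zero
  rw [h2]; rfl

lemma par_om (n : ℕ) : par n (omegaTop n) = msign n • omegaTop n := by
  funext U
  rw [par_apply]
  simp only [omegaTop, mono, Pi.smul_apply, smul_eq_mul]
  split_ifs with h
  · subst h; simp
  · simp

lemma Om_X (n : ℕ) (i : Fin n) : Om n * X n i = 0 := by
  unfold Om
  rw [mul_swap_X, par_om, map_smul, mul_smul_comm, ← mul_X, X_om, map_zero, smul_zero]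

lemma XP_Om_self (n : ℕ) (i : Fin n) :
    X n i * pd n i * Om n = Om n + Om n * (X n i * pd n i) := by
  unfold Om; rw [XP_mul, XP_om_self]

lemma XP_Om_ne (n : ℕ) (i j : Fin n) (hij : i ≠ j) :
    X n i * pd n j * Om n = Om n * (X n i * pd n j) := by
  unfold Om; rw [XP_mul, XP_om_ne _ _ _ hij, map_zero, zero_add]

lemma par_Om (n : ℕ) (hn : Even n) : par n * Om n = Om n * par n := by
  unfold Om; rw [par_mul, par_om, map_smul]
  simp [msign, hn.neg_one_pow]

/-- `1 - c ω` -/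
def K (n : ℕ) (c : ℂ) : E n := 1 - c • Om n

lemma K_X (n : ℕ) (c : ℂ) (i : Fin n) : K n c * X n i = X n i := by
  unfold K; rw [sub_mul, one_mul, smul_mul_assoc, Om_X, smul_zero, sub_zero]

lemma par_K (n : ℕ) (c : ℂ) (h : c = 0 ∨ Even n) : par n * K n c = K n c * par n := by
  unfold K
  rw [sub_mul, mul_sub, one_mul, mul_one, smul_mul_assoc, mul_smul_comm]
  rcases h with h | h
  · simp [h]
  · rw [par_Om _ h]

lemma XP_K_ne (n : ℕ) (c : ℂ) (i j : Fin n) (hij : i ≠ j) :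
    X n i * pd n j * K n c = K n c * (X n i * pd n j) := by
  unfold K
  rw [sub_mul, mul_sub, one_mul, mul_one, smul_mul_assoc, mul_smul_comm, XP_Om_ne _ _ _ hij]

lemma XP_K_self (n : ℕ) (c : ℂ) (i : Fin n) :
    X n i * pd n i * K n c = K n c * (X n i * pd n i) - c • Om n := by
  unfold K
  rw [sub_mul, mul_sub, one_mul, mul_one, smul_mul_assoc, mul_smul_comm, XP_Om_self]
  rw [smul_add]; abel

/-- weight of `x_S ∂_m` -/
def wtv {n : ℕ} (m : Fin n) (S : Finset (Fin n)) : Fin n → ℤ :=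
  fun k => (if k ∈ S then 1 else 0) - (if k = m then 1 else 0)

/-- weight component -/
def comp {n : ℕ} (ν : Fin n → ℤ) (F : Fin n → Lambda n) : Fin n → Lambda n :=
  fun m S => if wtv m S = ν then F m S else 0

lemma adF_comp {n : ℕ} (i : Fin n) (ν : Fin n → ℤ) (F : Fin n → Lambda n) :
    adF n i i (comp ν F) = (ν i : ℂ) • comp ν F := by
  funext m S
  simp only [adF, Pi.sub_apply, Pi.smul_apply, smul_eq_mul, XPself_apply]
  by_cases h : wtv m S = ν
  · have : (ν i : ℂ) = (if i ∈ S then 1 else 0) - (if i = m then 1 else 0) := by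
      rw [← h]; simp [wtv]
    rw [this]
    by_cases hm : m = i
    · subst hm
      by_cases hS : m ∈ S <;> simp [hS]
    · have hm' : ¬ i = m := fun h => hm h.symm
      by_cases hS : i ∈ S <;> simp [hS, hm, hm']
  · by_cases hm : m = i
    · subst hm; simp [comp, h]
    · simp [comp, h, hm]

lemma div_comp {n : ℕ} (ν : Fin n → ℤ) (F : Fin n → Lambda n) (hF : divMap n F = 0) :
    divMap n (comp ν F) = 0 := by
  funext T
  have h1 := congrFun hF T
  change (∑ m, pd n m (F m)) T = 0 at h1
  change (∑ m, pd n m (comp ν F m)) T = 0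
  rw [Finset.sum_apply] at h1 ⊢
  have key : ∀ m, pd n m (comp ν F m) T =
      if (fun k => if k ∈ T then (1:ℤ) else 0) = ν then pd n m (F m) T else 0 := by
    intro m
    rw [P_apply, P_apply]
    by_cases hm : m ∈ T
    · simp [hm]
    · simp only [hm, if_false, comp]
      have : wtv m (insert m T) = fun k => if k ∈ T then (1:ℤ) else 0 := by
        funext k
        unfold wtv
        by_cases hk : k = m
        · subst hk; simp [hm]
        · simp [hk]
      rw [this]
      split_ifs <;> simp
  rw [Finset.sum_congr rfl (fun m _ => key m)]
  split_ifs
  · exact h1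
  · simp

lemma par_comp {n : ℕ} (ν : Fin n → ℤ) (F : Fin n → Lambda n) (m : Fin n) :
    par n (comp ν F m) = - sgn ((∑ k, ν k : ℤ) : ZMod 2) • comp ν F m := by
  funext S
  rw [par_apply, Pi.smul_apply, smul_eq_mul]
  unfold comp
  split_ifs with h
  · congr 1
    have : ((∑ k, ν k : ℤ) : ZMod 2) = ((S.card + 1 : ℕ) : ZMod 2) := by
      rw [← h]
      simp only [wtv, Finset.sum_sub_distrib]
      simp
      rw [sub_eq_add_neg]
      congr 1
    rw [this, sgn_nat, msign_succ, neg_neg]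
  · simp

lemma comp_sum {n : ℕ} (F : Fin n → Lambda n) :
    F = ∑ ν ∈ Finset.univ.image (fun p : Fin n × Finset (Fin n) => wtv p.1 p.2), comp ν F := by
  funext m S
  simp only [Finset.sum_apply, comp]
  rw [Finset.sum_ite_eq, if_pos]
  exact Finset.mem_image.2 ⟨(m, S), Finset.mem_univ _, rfl⟩

lemma par_W {n : ℕ} (s : ℂ) (F : Fin n → Lambda n) (h : ∀ m, par n (F m) = - s • F m) :
    par n * Wmap n F = s • (Wmap n F * par n) := by
  rw [Wmap_apply, Finset.mul_sum, Finset.sum_mul, Finset.smul_sum]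
  apply Finset.sum_congr rfl
  intro m _
  rw [← mul_assoc, par_mul, h, mul_assoc, parP, E_mul_neg, map_smul, smul_mul_assoc, mul_assoc]
  module

/-- coordinates on the diagonal -/
def co (n : ℕ) (k : Fin n) : E n →ₗ[ℂ] ℂ where
  toFun D := D (mono n {k}) {k}
  map_add' := by intro a b; simp
  map_smul' := by intro a b; simp

lemma co_XP (n : ℕ) (k m : Fin n) : co n k (X n m * pd n m) = if m = k then 1 else 0 := by
  change X n m (pd n m (mono n {k})) {k} = _
  rw [XPself_apply]
  simp [mono]

lemma diag_expand (n : ℕ) (h : E n) (hh : h ∈ diagSpan n) :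
    h = ∑ k, co n k h • (X n k * pd n k) := by
  unfold diagSpan at hh
  induction hh using Submodule.span_induction with
  | mem x hx =>
    obtain ⟨i, rfl⟩ := hx
    change X n i * pd n i = ∑ k, co n k (X n i * pd n i) • (X n k * pd n k)
    simp [co_XP]
  | zero => simp
  | add x y _ _ hx hy =>
    simp only [map_add, add_smul, Finset.sum_add_distrib]
    rw [← hx, ← hy]
  | smul a x _ hx =>
    simp only [map_smul, smul_eq_mul, mul_smul, ← Finset.smul_sum]
    rw [← hx]

lemma XP_diag (n : ℕ) (i : Fin n) : X n i * pd n i ∈ diagSpan n :=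
  Submodule.subset_span ⟨i, rfl⟩

lemma par_diag (n : ℕ) (h : E n) (hh : h ∈ diagSpan n) : par n * h = h * par n := by
  rw [diag_expand n h hh, Finset.mul_sum, Finset.sum_mul]
  apply Finset.sum_congr rfl
  intro k _
  rw [mul_smul_comm, smul_mul_assoc, par_XP]

lemma X_one (n : ℕ) (k : Fin n) : X n k (mono n ∅) = mono n {k} := by
  rw [X_mono _ _ _ (by simp)]
  simp [sg, msign]

lemma mul_apply_one (n : ℕ) (g : Lambda n) : mulOp n g (mono n ∅) = g := by
  have := lam_ind n (LinearMap.eqLocus ((mulOp n).flip (mono n ∅)) LinearMap.id) ?_ ?_ g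
  · simpa using this
  · simp [mul_one']
  · intro i g hg
    simp only [LinearMap.mem_eqLocus, LinearMap.flip_apply, LinearMap.id_apply] at hg ⊢
    rw [mul_X, Module.End.mul_apply, hg]

lemma P_x (n : ℕ) (m k : Fin n) : pd n m (mono n {k}) = if m = k then mono n ∅ else 0 := by
  rw [← X_one, ← Module.End.mul_apply]
  split_ifs with h
  · subst h; rw [PX_self]; simp [P_one]
  · rw [PX_ne _ _ _ h]; simp [P_one]

lemma W_x (n : ℕ) (F : Fin n → Lambda n) (k : Fin n) : Wmap n F (mono n {k}) = F k := by
  rw [Wmap_apply, LinearMap.sum_apply]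
  simp only [Module.End.mul_apply, P_x, apply_ite (mulOp n _), mul_apply_one, map_zero]
  simp

lemma co_KW (n : ℕ) (hn : 4 ≤ n) (c : ℂ) (F : Fin n → Lambda n) (k : Fin n) :
    co n k (K n c * Wmap n F) = F k {k} := by
  change (K n c * Wmap n F) (mono n {k}) {k} = _
  rw [Module.End.mul_apply, W_x]
  unfold K
  rw [LinearMap.sub_apply, LinearMap.smul_apply, Pi.sub_apply, Pi.smul_apply]
  have : Om n (F k) {k} = 0 := by
    change lmulFun n (omegaTop n) (F k) {k} = 0
    unfold lmulFun
    apply Finset.sum_eq_zero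
    intro S hS
    have : S ≠ Finset.univ := by
      rintro rfl
      have := Finset.card_le_card (Finset.mem_powerset.1 hS)
      simp at this
      omega
    simp [omegaTop, mono, this]
  rw [this]; simp

lemma trace_zero (n : ℕ) (hn : 4 ≤ n) (c : ℂ) (F : Fin n → Lambda n) (hF : F ∈ divFree n) :
    ∑ k, co n k (K n c * Wmap n F) = 0 := by
  simp only [co_KW n hn]
  have h1 : divMap n F = 0 := hF
  have h1 := congrFun h1 ∅
  change (∑ m, pd n m (F m)) ∅ = 0 at h1
  rw [Finset.sum_apply] at h1
  rw [← h1]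
  apply Finset.sum_congr rfl
  intro k _
  rw [P_apply]; simp [sg, msign]

/-- uniform description of the three algebras -/
structure Desc (n : ℕ) (t : CT) (c : ℂ) (M : Submodule ℂ (Fin n → Lambda n)) : Prop where
  mem : ∀ x, x ∈ t.algebra n ↔ ∃ F ∈ M, x = K n c * Wmap n F
  ad : ∀ i j F, F ∈ M → adF n i j F ∈ M
  cmp : ∀ ν F, F ∈ M → comp ν F ∈ M
  even : c = 0 ∨ Even n
  tr : t ≠ CT.W → M = divFree n
  cW : t = CT.W → c = 0 ∧ M = ⊤
  div : divFree n ≤ M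

lemma adF_div (n : ℕ) (i j) (F) (h : F ∈ divFree n) : adF n i j F ∈ divFree n := by
  change divMap n _ = 0
  rw [div_adF, show divMap n F = 0 from h]; simp

lemma K_zero (n : ℕ) : K n 0 = 1 := by simp [K]

lemma desc (n : ℕ) (t : CT) (ht : t = CT.W ∨ t = CT.S ∨ (t = CT.St ∧ Even n)) :
    ∃ c M, Desc n t c M := by
  rcases ht with rfl | rfl | ⟨rfl, he⟩
  · refine ⟨0, ⊤, ⟨?_, ?_, ?_, Or.inl rfl, ?_, ?_, le_top⟩⟩
    · intro x; rw [K_zero]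
      constructor
      · rintro ⟨F, rfl⟩; exact ⟨F, trivial, by simp⟩
      · rintro ⟨F, _, rfl⟩; exact ⟨F, by simp⟩
    · intros; trivial
    · intros; trivial
    · intro h; exact absurd rfl h
    · intro _; exact ⟨rfl, rfl⟩
  · refine ⟨0, divFree n, ⟨?_, adF_div n, fun ν F h => div_comp ν F h, Or.inl rfl,
      fun _ => rfl, ?_, le_rfl⟩⟩
    · intro x; rw [K_zero]
      constructor
      · rintro ⟨F, h, rfl⟩; exact ⟨F, h, by simp⟩
      · rintro ⟨F, h, rfl⟩; exact ⟨F, h, by simp⟩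
    · intro h; cases h
  · refine ⟨1, divFree n, ⟨?_, adF_div n, fun ν F h => div_comp ν F h, Or.inr he,
      fun _ => rfl, ?_, le_rfl⟩⟩
    · have key : ∀ F, Wmap n (oneMScale n F) = K n 1 * Wmap n F := by
        intro F
        rw [Wmap_apply, Wmap_apply, Finset.mul_sum]
        apply Finset.sum_congr rfl
        intro m _
        change mulOp n (mulOp n (oneM n) (F m)) * _ = _
        rw [mul_mul', mul_assoc]
        congr 1
        simp [K, oneM, mul_one', Om]
      intro x
      constructor
      · rintro ⟨F, h, rfl⟩; exact ⟨F, h, key F⟩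
      · rintro ⟨F, h, rfl⟩; exact ⟨F, h, key F⟩
    · intro h; cases h

/-- weights as functionals on the Cartan subalgebra -/
def wtD (t : CT) (n : ℕ) (ν : Fin n → ℤ) : Module.Dual ℂ (t.cartan n) :=
  (∑ k, (ν k : ℂ) • co n k) ∘ₗ (t.cartan n).subtype

lemma wtD_apply (t : CT) (n : ℕ) (ν : Fin n → ℤ) (h : t.cartan n) :
    wtD t n ν h = ∑ k, (ν k : ℂ) * co n k h := by
  simp [wtD]

section
variable {n : ℕ} {t : CT} {c : ℂ} {M : Submodule ℂ (Fin n → Lambda n)}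

lemma Desc.trace (hD : Desc n t c M) (hn : 4 ≤ n) (htW : t ≠ CT.W) (h : E n)
    (hh : h ∈ t.algebra n) : ∑ k, co n k h = 0 := by
  obtain ⟨F, hF, rfl⟩ := (hD.mem h).1 hh
  rw [hD.tr htW] at hF
  exact trace_zero n hn c F hF

lemma Desc.close (hD : Desc n t c M) (i j : Fin n) (hij : i ≠ j) (x : E n)
    (hx : x ∈ t.algebra n) : x * (X n i * pd n j) - (X n i * pd n j) * x ∈ t.algebra n := by
  obtain ⟨F, hF, rfl⟩ := (hD.mem x).1 hx
  rw [hD.mem]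
  refine ⟨- adF n i j F, M.neg_mem (hD.ad i j F hF), ?_⟩
  rw [map_neg, ← XP_W, ← mul_assoc (X n i * pd n j), XP_K_ne _ _ _ _ hij, E_mul_neg, mul_sub]
  simp only [mul_assoc]
  abel

lemma XP_single (i j : Fin n) : X n i * pd n j = Wmap n (Pi.single j (mono n {i})) := by
  rw [Wmap_apply, Finset.sum_eq_single j]
  · simp [X]
  · intro b _ hb; simp [hb]
  · simp

lemma Desc.XP_ne (hD : Desc n t c M) (i j : Fin n) (hij : i ≠ j) :
    X n i * pd n j ∈ t.algebra n := by
  rw [hD.mem]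
  refine ⟨Pi.single j (mono n {i}), hD.div ?_, ?_⟩
  · change ∑ m, pd n m _ = 0
    apply Finset.sum_eq_zero
    intro m _
    by_cases hm : m = j
    · subst hm; simp [P_x, hij.symm]
    · simp [hm]
  · rw [← XP_single, ← mul_assoc, K_X]

lemma Desc.XP_sub (hD : Desc n t c M) (i j : Fin n) :
    X n i * pd n i - X n j * pd n j ∈ t.algebra n := by
  rw [hD.mem]
  refine ⟨Pi.single i (mono n {i}) - Pi.single j (mono n {j}), hD.div ?_, ?_⟩
  · change divMap n _ = 0
    have : ∀ i, divMap n (Pi.single i (mono n {i})) = mono n ∅ := by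
      intro i
      change ∑ m, pd n m _ = _
      rw [Finset.sum_eq_single i]
      · simp [P_x]
      · intro m _ hm; simp [hm]
      · simp
    rw [map_sub, this, this, sub_self]
  · rw [map_sub, ← XP_single, ← XP_single, mul_sub, ← mul_assoc, K_X, ← mul_assoc, K_X]

lemma Desc.weight (hD : Desc n t c M) (hn : 4 ≤ n) (ν : Fin n → ℤ) (F : Fin n → Lambda n)
    (hF : F ∈ M) : K n c * Wmap n (comp ν F) ∈ wtsp t n (t.algebra n) (wtD t n ν) := by
  refine ⟨(hD.mem _).2 ⟨_, hD.cmp ν F hF, rfl⟩, ?_⟩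
  rintro ⟨h, hL, hd⟩
  change sbL n h _ = _
  rw [sbL_even_left _ _ _ (par_diag n h hd), wtD_apply]
  change _ = (∑ k, (ν k : ℂ) * co n k h) • _
  set W := Wmap n (comp ν F) with hW
  have key : ∀ k, X n k * pd n k * (K n c * W) - (K n c * W) * (X n k * pd n k) =
     (ν k : ℂ) • (K n c * W) - c • (Om n * W) := by
    intro k
    have h1 := XP_W n k k (comp ν F)
    rw [adF_comp, map_smul, ← hW] at h1
    have h2 : X n k * pd n k * W = (ν k : ℂ) • W + W * (X n k * pd n k) := by
      rw [← h1]; abel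
    rw [← mul_assoc, XP_K_self, sub_mul, mul_assoc (K n c), h2, mul_add, mul_smul_comm,
      smul_mul_assoc, mul_assoc (K n c)]
    abel
  have h3 : c • (∑ k, co n k h) • (Om n * W) = 0 := by
    by_cases hc : c = 0
    · rw [hc, zero_smul]
    · rw [hD.trace hn (fun h => hc (hD.cW h).1) h hL]; simp
  have h4 : h * (K n c * W) - (K n c * W) * h =
      ∑ k, co n k h • (X n k * pd n k * (K n c * W) - (K n c * W) * (X n k * pd n k)) := by
    suffices gen : ∀ a : Fin n → ℂ, h = ∑ k, a k • (X n k * pd n k) →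
      h * (K n c * W) - (K n c * W) * h =
      ∑ k, a k • (X n k * pd n k * (K n c * W) - (K n c * W) * (X n k * pd n k)) by
      exact gen _ (diag_expand n h hd)
    intro a ha
    rw [ha, Finset.mul_sum, Finset.sum_mul, ← Finset.sum_sub_distrib]
    apply Finset.sum_congr rfl
    intro k _
    rw [smul_sub, smul_mul_assoc, mul_smul_comm]
  rw [h4, Finset.sum_congr rfl (fun k _ => by rw [key k])]
  simp only [smul_sub, Finset.sum_sub_distrib]
  rw [← Finset.sum_smul, smul_comm, h3, sub_zero, Finset.sum_smul]
  apply Finset.sum_congr rfl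
  intro k _
  rw [smul_smul, mul_comm]

lemma Desc.parity (hD : Desc n t c M) (ν : Fin n → ℤ) (F : Fin n → Lambda n) :
    K n c * Wmap n (comp ν F) ∈ epar n ((∑ k, ν k : ℤ) : ZMod 2) := by
  rw [mem_epar, ← mul_assoc, par_K _ _ hD.even, mul_assoc, par_W _ _ (par_comp ν F), mul_smul_comm,
    mul_assoc]

lemma Desc.induct (hD : Desc n t c M) (N : Submodule ℂ (E n))
    (h : ∀ ν, ∀ F ∈ M, K n c * Wmap n (comp ν F) ∈ N) (x : E n) (hx : x ∈ t.algebra n) : x ∈ N := by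
  obtain ⟨F, hF, rfl⟩ := (hD.mem x).1 hx
  rw [comp_sum F, map_sum, Finset.mul_sum]
  exact N.sum_mem fun ν _ => h ν F hF

end

section
variable {n : ℕ} {t : CT} {c : ℂ} {M : Submodule ℂ (Fin n → Lambda n)}

lemma dual_sub (μ : Module.Dual ℂ (t.cartan n)) (a b : t.cartan n) : μ (a - b) = μ a - μ b :=
  map_sub μ a b

lemma dual_smul (μ : Module.Dual ℂ (t.cartan n)) (s : ℂ) (a : t.cartan n) : μ (s • a) = s * μ a :=
  map_smul μ s a

lemma E_neg_smul (s : ℂ) (a : E n) : (-s) • a = -(s • a) := neg_smul s a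

/-- homogeneous weight vectors -/
def G (t : CT) (n : ℕ) (ζ : Module.Dual ℂ (t.cartan n)) (α : ZMod 2) (x : E n) : Prop :=
  x ∈ t.algebra n ⊓ epar n α ∧ x ∈ wtsp t n (t.algebra n) ζ

lemma diag_comm (h k : E n) (hh : h ∈ diagSpan n) (hk : k ∈ diagSpan n) : h * k = k * h := by
  have key : ∀ i j, X n i * pd n i * (X n j * pd n j) = X n j * pd n j * (X n i * pd n i) := by
    intro i j
    apply LinearMap.ext; intro g; funext U
    simp only [Module.End.mul_apply, XPself_apply]
    split_ifs <;> rfl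
  rw [diag_expand n h hh, diag_expand n k hk, Finset.sum_mul_sum, Finset.sum_mul_sum,
    Finset.sum_comm]
  apply Finset.sum_congr rfl; intro i _
  apply Finset.sum_congr rfl; intro j _
  rw [smul_mul_smul_comm, smul_mul_smul_comm, key, mul_comm]

lemma cartan_even (k : t.cartan n) : par n * (k : E n) = k * par n := par_diag n k k.2.2

lemma G_cartan (k : t.cartan n) : G t n 0 0 (k : E n) := by
  refine ⟨⟨k.2.1, (mem_epar_zero n k).2 (cartan_even k)⟩, k.2.1, fun h => ?_⟩
  rw [sbL_even_left _ _ _ (cartan_even h), diag_comm _ _ h.2.2 k.2.2]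
  simp

lemma comp_eq (ν : Fin n → ℤ) (F : Fin n → Lambda n) (h : ∀ m S, F m S ≠ 0 → wtv m S = ν) :
    comp ν F = F := by
  funext m S
  unfold comp
  split_ifs with h1
  · rfl
  · by_contra h2
    exact h1 (h m S (fun h3 => h2 h3.symm))

lemma Desc.G_comp (hD : Desc n t c M) (hn : 4 ≤ n) (ν : Fin n → ℤ) (F : Fin n → Lambda n)
    (hF : F ∈ M) :
    G t n (wtD t n ν) ((∑ k, ν k : ℤ) : ZMod 2) (K n c * Wmap n (comp ν F)) :=
  ⟨⟨(hD.mem _).2 ⟨_, hD.cmp ν F hF, rfl⟩, hD.parity ν F⟩, hD.weight hn ν F hF⟩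

lemma Desc.G_XP (hD : Desc n t c M) (hn : 4 ≤ n) (i j : Fin n) (hij : i ≠ j) :
    G t n (wtD t n (wtv j {i})) 0 (X n i * pd n j) := by
  refine ⟨⟨hD.XP_ne i j hij, (mem_epar_zero n _).2 (par_XP n i j)⟩, ?_⟩
  have h1 : comp (wtv j {i}) (Pi.single j (mono n {i})) = Pi.single j (mono n {i}) := by
    apply comp_eq
    intro m S h
    by_cases hm : m = j
    · subst hm
      simp only [Pi.single_eq_same, mono, ne_eq, ite_eq_right_iff, one_ne_zero, imp_false,
        not_not] at h
      rw [h]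
    · simp [hm] at h
  have hF : (Pi.single j (mono n {i}) : Fin n → Lambda n) ∈ M := by
    apply hD.div
    change ∑ m, pd n m _ = 0
    apply Finset.sum_eq_zero
    intro m _
    by_cases hm : m = j
    · subst hm; simp [P_x, hij.symm]
    · simp [hm]
  have := hD.weight hn (wtv j {i}) _ hF
  rwa [h1, ← XP_single, ← mul_assoc, K_X] at this

lemma wtD_e (i j : Fin n) (h : t.cartan n) :
    wtD t n (wtv j {i}) h = co n i h - co n j h := by
  rw [wtD_apply]
  simp [wtv, sub_mul, Finset.sum_sub_distrib]

/-- `x_i∂_i - x_j∂_j` in the Cartan subalgebra -/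
def Desc.hh (hD : Desc n t c M) (i j : Fin n) : t.cartan n :=
  ⟨X n i * pd n i - X n j * pd n j, hD.XP_sub i j,
    (diagSpan n).sub_mem (XP_diag n i) (XP_diag n j)⟩

lemma Desc.co_hh (hD : Desc n t c M) (i j k : Fin n) :
    co n k (hD.hh i j : E n) = (if i = k then 1 else 0) - (if j = k then 1 else 0) := by
  change co n k (X n i * pd n i - X n j * pd n j) = _
  rw [map_sub, co_XP, co_XP]

lemma comm_XP (i j k : Fin n) (hij : i ≠ j) :
    X n i * pd n k * (X n k * pd n j) - X n k * pd n j * (X n i * pd n k) = X n i * pd n j := by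
  have h1 : X n i * pd n k * (X n k * pd n j) =
      X n i * pd n j - X n i * X n k * (pd n k * pd n j) := by
    rw [mul_assoc, ← mul_assoc (pd n k), PX_self, sub_mul, mul_sub, one_mul]
    simp only [mul_assoc]
  have h2 : X n k * pd n j * (X n i * pd n k) = - (X n i * X n k * (pd n k * pd n j)) := by
    rw [mul_assoc, ← mul_assoc (pd n j), PX_ne _ _ _ hij.symm, E_neg_mul, E_mul_neg, mul_assoc,
      PP n j k, ← mul_assoc (X n k), XX n k i, E_neg_mul, E_mul_neg]
    simp only [neg_neg]
  rw [h1, h2]; abel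

lemma comm_XP' (i j : Fin n) :
    X n i * pd n j * (X n j * pd n i) - X n j * pd n i * (X n i * pd n j) =
      X n i * pd n i - X n j * pd n j := by
  have h1 : ∀ i j, X n i * pd n j * (X n j * pd n i) =
      X n i * pd n i - X n i * X n j * (pd n j * pd n i) := by
    intro i j
    rw [mul_assoc, ← mul_assoc (pd n j), PX_self, sub_mul, mul_sub, one_mul]
    simp only [mul_assoc]
  rw [h1, h1, XX n j i, PP n i j, E_neg_mul, E_mul_neg]; abel

lemma comm_bracket (v a b : E n) (ha : v * a = a * v) (hb : v * b = b * v) :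
    v * (a * b - b * a) = (a * b - b * a) * v := by
  rw [mul_sub, sub_mul, ← mul_assoc, ha, mul_assoc, hb, ← mul_assoc v b, hb, mul_assoc b, ha]
  simp only [mul_assoc]

lemma exists_two (hn : 4 ≤ n) (i j : Fin n) : ∃ k l : Fin n, k ≠ i ∧ k ≠ j ∧ l ≠ i ∧ l ≠ j ∧ k ≠ l := by
  have h1 : 1 < (({i, j} : Finset (Fin n))ᶜ).card := by
    rw [Finset.card_compl, Fintype.card_fin]
    have : ({i, j} : Finset (Fin n)).card ≤ 2 := Finset.card_le_two
    omega
  obtain ⟨k, hk, l, hl, hkl⟩ := Finset.one_lt_card.1 h1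
  simp only [Finset.mem_compl, Finset.mem_insert, Finset.mem_singleton, not_or] at hk hl
  exact ⟨k, l, hk.1, hk.2, hl.1, hl.2, hkl⟩

lemma Desc.claim1 (hD : Desc n t c M) (hn : 4 ≤ n) (μ : Module.Dual ℂ (t.cartan n)) (v : E n)
    (H : ∀ i j, i ≠ j → (∃ k, μ k = 0 ∧ wtD t n (wtv j {i}) k ≠ 0) →
      v * (X n i * pd n j) = (X n i * pd n j) * v) (i j : Fin n) (hij : i ≠ j) :
    v * (X n i * pd n j) = (X n i * pd n j) * v := by
  by_cases hex : ∃ k, μ k = 0 ∧ wtD t n (wtv j {i}) k ≠ 0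
  · exact H i j hij hex
  push Not at hex
  obtain ⟨k, l, hki, hkj, hli, hlj, hkl⟩ := exists_two hn i j
  have h1 : μ (hD.hh k l) = 0 := by
    by_contra h1
    have h3 := hex (μ (hD.hh i j) • hD.hh k l - μ (hD.hh k l) • hD.hh i j) (by
      rw [dual_sub, dual_smul, dual_smul]; ring)
    rw [dual_sub, dual_smul, dual_smul, wtD_e, wtD_e] at h3
    simp only [hD.co_hh] at h3
    simp [hki, hkj, hli, hlj, hij, hij.symm, h1] at h3
  rw [← comm_XP i j k hij]
  apply comm_bracket
  · refine H i k hki.symm ⟨hD.hh k l, h1, ?_⟩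
    rw [wtD_e]; simp only [hD.co_hh]
    simp [hki, hli, hkl.symm]
  · refine H k j hkj ⟨hD.hh k l, h1, ?_⟩
    rw [wtD_e]; simp only [hD.co_hh]
    simp [hkj, hlj, hkl.symm]

lemma Desc.claim2 (hD : Desc n t c M) (μ : Module.Dual ℂ (t.cartan n)) (v : E n)
    (hv : v ∈ wtsp t n (t.algebra n) μ)
    (H : ∀ i j, i ≠ j → v * (X n i * pd n j) = (X n i * pd n j) * v) (i j : Fin n) (hv0 : v ≠ 0) :
    μ (hD.hh i j) = 0 := by
  have h1 := hv.2 (hD.hh i j)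
  rw [sbL_even_left _ _ _ (cartan_even _)] at h1
  have h2 : v * (hD.hh i j : E n) = (hD.hh i j : E n) * v := by
    change v * (X n i * pd n i - X n j * pd n j) = (X n i * pd n i - X n j * pd n j) * v
    by_cases hij : i = j
    · subst hij; simp
    · rw [← comm_XP' i j]
      exact comm_bracket _ _ _ (H i j hij) (H j i (Ne.symm hij))
  rw [h2, sub_self] at h1
  exact (smul_eq_zero.1 h1.symm).resolve_right hv0

lemma Desc.claim3 (hD : Desc n t c M) (hn : 4 ≤ n) (htW : t ≠ CT.W)
    (μ : Module.Dual ℂ (t.cartan n)) (H : ∀ i j, μ (hD.hh i j) = 0) : μ = 0 := by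
  ext h
  let l : Fin n := ⟨0, by omega⟩
  have h1 : h = ∑ k, co n k (h : E n) • hD.hh k l := by
    apply Subtype.ext
    rw [AddSubmonoidClass.coe_finsetSum]
    change (h : E n) = ∑ k, co n k (h : E n) • (X n k * pd n k - X n l * pd n l)
    simp only [smul_sub, Finset.sum_sub_distrib]
    rw [← Finset.sum_smul, hD.trace hn htW h h.2.1, zero_smul, sub_zero]
    exact diag_expand n h h.2.2
  rw [h1, map_sum]
  simp [H]

/-- `x_i∂_i` for type W -/
def Desc.he {c : ℂ} {M : Submodule ℂ (Fin n → Lambda n)} (hD : Desc n CT.W c M) (i : Fin n) :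
    CT.W.cartan n :=
  ⟨X n i * pd n i, (hD.mem _).2 ⟨Pi.single i (mono n {i}), by rw [(hD.cW rfl).2]; trivial, by
    rw [← XP_single, ← mul_assoc, K_X]⟩, XP_diag n i⟩

lemma Desc.claim3W (hD : Desc n CT.W c M)
    (μ : Module.Dual ℂ (CT.W.cartan n)) (H : ∀ i, μ (hD.he i) = 0) : μ = 0 := by
  ext h
  have h1 : h = ∑ k, co n k (h : E n) • hD.he k := by
    apply Subtype.ext
    rw [AddSubmonoidClass.coe_finsetSum]
    exact diag_expand n h h.2.2
  rw [h1, map_sum]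
  simp [H]

lemma Desc.G_W (hD : Desc n CT.W c M) (hn : 4 ≤ n) (ν : Fin n → ℤ) (F : Fin n → Lambda n)
    (h : ∀ m S, F m S ≠ 0 → wtv m S = ν) :
    G CT.W n (wtD CT.W n ν) ((∑ k, ν k : ℤ) : ZMod 2) (Wmap n F) := by
  have := hD.G_comp hn ν F (by rw [(hD.cW rfl).2]; trivial)
  rwa [comp_eq ν F h, (hD.cW rfl).1, K_zero, one_mul] at this

lemma Desc.kernel (hD : Desc n t c M) (hn : 4 ≤ n)
    (μ : Module.Dual ℂ (t.cartan n)) (hμ : μ ≠ 0) (p : ZMod 2) (v : E n)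
    (hv : v ∈ wtsp t n (t.algebra n) μ) (hp : v ∈ epar n p)
    (H : ∀ ζ α x, G t n ζ α x → (∃ k, μ k = 0 ∧ ζ k ≠ 0) → sbL n v x = 0) : v = 0 := by
  by_contra hv0
  have h1 := hD.claim1 hn μ v (by
    intro i j hij hex
    have := H _ _ _ (hD.G_XP hn i j hij) hex
    rw [sbL_even_right _ _ _ (par_XP n i j)] at this
    exact sub_eq_zero.1 this)
  have h2 := fun i j => hD.claim2 μ v hv h1 i j hv0
  by_cases htW : t = CT.W
  · subst htW
    apply hμ
    apply hD.claim3W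
    intro i
    obtain ⟨j, _, hji, _⟩ := exists_two hn i i
    have e1 : sbL n v (pd n j) = 0 := by
      have hW : pd n j = Wmap n (Pi.single j (mono n ∅)) := by
        rw [Wmap_apply, Finset.sum_eq_single j]
        · simp [mul_one']
        · intro b _ hb; simp [hb]
        · simp
      rw [hW]
      refine H _ _ _ (hD.G_W hn (wtv j ∅) _ ?_) ⟨hD.hh j i, h2 j i, ?_⟩
      · intro m S h
        by_cases hm : m = j
        · subst hm
          simp only [Pi.single_eq_same, mono, ne_eq, ite_eq_right_iff, one_ne_zero, imp_false,
            not_not] at h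
          rw [h]
        · simp [hm] at h
      · rw [wtD_apply]; simp only [hD.co_hh]
        simp [wtv, hji.symm]
    have e2 : sbL n v (X n j * (X n i * pd n i)) = 0 := by
      have hW : X n j * (X n i * pd n i) = Wmap n (Pi.single i (X n j (mono n {i}))) := by
        rw [Wmap_apply, Finset.sum_eq_single i]
        · simp only [Pi.single_eq_same]; rw [mul_X, mul_assoc]; rfl
        · intro b _ hb; simp [hb]
        · simp
      rw [hW]
      refine H _ _ _ (hD.G_W hn (wtv i {j, i}) _ ?_) ⟨hD.hh j i, h2 j i, ?_⟩
      · intro m S h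
        by_cases hm : m = i
        · subst hm
          rw [Pi.single_eq_same, X_mono _ _ _ (by simpa using hji)] at h
          simp only [Pi.smul_apply, mono, smul_eq_mul, ne_eq, mul_ite, mul_one, mul_zero,
            ite_eq_right_iff, Classical.not_imp] at h
          rw [h.1]
        · simp [hm] at h
      · rw [wtD_apply]; simp only [hD.co_hh]
        rw [Finset.sum_eq_single j]
        · simp [wtv, hji, hji.symm]
        · intro k _ hk
          by_cases hki : k = i
          · subst hki; simp [wtv]
          · simp [Ne.symm hk, Ne.symm hki]
        · simp
    have parQ : par n * (X n j * (X n i * pd n i)) = - (X n j * (X n i * pd n i) * par n) := by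
      rw [← mul_assoc, parX, E_neg_mul, mul_assoc, par_XP]; simp only [mul_assoc]
    have hPQ : pd n j * (X n j * (X n i * pd n i)) + X n j * (X n i * pd n i) * pd n j =
        X n i * pd n i := by
      rw [← mul_assoc, PX_self, sub_mul, one_mul, mul_assoc (X n j) (X n i * pd n i) (pd n j),
        XP_P n i i j, if_neg hji]
      simp only [mul_assoc, sub_zero]
      abel
    have hcomm : v * (X n i * pd n i) = X n i * pd n i * v := by
      rw [← hPQ]
      generalize X n j * (X n i * pd n i) = Q at *
      rcases sgn_cases p with ⟨rfl, h⟩ | ⟨rfl, h⟩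
      · rw [mem_epar_zero] at hp
        rw [sbL_even_left _ _ _ hp, sub_eq_zero] at e1 e2
        rw [mul_add, add_mul, ← mul_assoc, e1, mul_assoc, e2, ← mul_assoc, ← mul_assoc, e2,
          mul_assoc Q, e1]
        simp only [mul_assoc]
      · rw [mem_epar, h, E_neg_smul, one_smul] at hp
        rw [sbL_odd_odd _ _ _ (parP n j) hp, add_eq_zero_iff_eq_neg] at e1
        rw [sbL_odd_odd _ _ _ parQ hp, add_eq_zero_iff_eq_neg] at e2
        rw [mul_add, add_mul, ← mul_assoc, e1, E_neg_mul, mul_assoc, e2, ← mul_assoc, e2,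
          E_neg_mul, mul_assoc Q, e1]
        simp only [mul_assoc, E_mul_neg, neg_neg]
    have h3 := hv.2 (hD.he i)
    rw [sbL_even_left _ _ _ (cartan_even _)] at h3
    have h4 : (hD.he i : E n) * v - v * (hD.he i : E n) = 0 := by
      change X n i * pd n i * v - v * (X n i * pd n i) = 0
      rw [hcomm, sub_self]
    rw [h4] at h3
    exact (smul_eq_zero.1 h3.symm).resolve_right hv0
  · exact hμ (hD.claim3 hn htW μ h2)

end

lemma main_aux (n : ℕ) (hn : 4 ≤ n) (t : CT) (c : ℂ) (M : Submodule ℂ (Fin n → Lambda n))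
    (hD : Desc n t c M)
    (pf : ZMod 2) (f : E n →ₗ[ℂ] E n →ₗ[ℂ] E n)
    (hf : IsSuperBider n (t.algebra n) pf f)
    (eps : Module.Dual ℂ (t.cartan n)) (heps : eps ≠ 0)
    (hw : t.HasWeight n f eps) :
    ∀ x ∈ t.algebra n, ∀ y ∈ t.algebra n, f x y = 0 := by
  have A : ∀ ζ α x η β z, G t n ζ α x → G t n η β z → ∀ k : t.cartan n,
      (eps + ζ) k • f x z = - sbL n (f x k) z := by
    intro ζ α x η β z hx hz k
    have h1 := hf.eq2 α 0 β x hx.1 k (G_cartan k).1 z hz.1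
    rw [hz.2.2 k, mul_zero, sgn_zero, one_smul, (hw ζ η x hx.2 z hz.2).2 k, map_smul] at h1
    simp only [LinearMap.add_apply, add_smul] at h1 ⊢
    rw [eq_neg_iff_add_eq_zero]
    have h2 := sub_eq_zero.2 h1.symm
    rw [← h2]; abel
  have B : ∀ ζ α x η β z, G t n ζ α x → G t n η β z → ∀ k : t.cartan n,
      (eps + η) k • f x z = - sgn (α * β) • sbL n (f k z) x := by
    intro ζ α x η β z hx hz k
    have h1 := hf.eq1 0 α β k (G_cartan k).1 x hx.1 z hz.1
    rw [hx.2.2 k, zero_mul, sgn_zero, one_smul, (hw ζ η x hx.2 z hz.2).2 k, map_smul] at h1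
    rw [LinearMap.smul_apply] at h1
    simp only [LinearMap.add_apply, add_smul] at h1 ⊢
    rw [E_neg_smul, eq_neg_iff_add_eq_zero]
    have h2 := sub_eq_zero.2 h1.symm
    rw [← h2]; abel
  obtain ⟨k0, hk0⟩ : ∃ k0, eps k0 = 1 := by
    obtain ⟨k, hk⟩ : ∃ k, eps k ≠ 0 := by
      by_contra h; push Not at h; exact heps (LinearMap.ext h)
    exact ⟨(eps k)⁻¹ • k, by rw [map_smul, smul_eq_mul, inv_mul_cancel₀ hk]⟩
  set w := f k0 k0 with hwdef
  have hwwt : w ∈ wtsp t n (t.algebra n) eps := by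
    have := hw 0 0 k0 (G_cartan k0).2 k0 (G_cartan k0).2
    simpa using this
  have hwp : w ∈ epar n pf := by
    have := (hf.maps 0 0 k0 (G_cartan k0).1 k0 (G_cartan k0).1).2
    simpa using this
  have b : ∀ k : t.cartan n, f k0 k = eps k • w := by
    intro k
    have h1 := A _ _ _ _ _ _ (G_cartan k0) (G_cartan k) k0
    rw [add_zero, hk0, one_smul, sbL_even_right _ _ _ (cartan_even k), neg_sub,
      ← sbL_even_left _ _ _ (cartan_even k), hwwt.2 k] at h1
    exact h1
  have cc : ∀ ζ α x, G t n ζ α x → ∀ k : t.cartan n, f x k = - eps k • sbL n w x := by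
    intro ζ α x hx k
    have h1 := B _ _ _ _ _ _ hx (G_cartan k) k0
    rw [add_zero, hk0, one_smul, mul_zero, sgn_zero, b, map_smul, LinearMap.smul_apply] at h1
    rw [h1]; module
  have d : ∀ ζ α x η β z, G t n ζ α x → G t n η β z → ∀ k : t.cartan n,
      (eps + ζ) k • f x z = eps k • sbL n (sbL n w x) z := by
    intro ζ α x η β z hx hz k
    rw [A _ _ _ _ _ _ hx hz k, cc _ _ _ hx, map_smul, LinearMap.smul_apply]
    module
  have hw0 : w = 0 := by
    refine hD.kernel hn eps heps pf w hwwt hwp ?_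
    rintro ζ α x hx ⟨k, hk, hζ⟩
    have h1 := d _ _ _ _ _ _ hx (G_cartan k0) k
    rw [hk, zero_smul, LinearMap.add_apply, hk, zero_add] at h1
    have h2 := (smul_eq_zero.1 h1).resolve_left hζ
    rw [cc _ _ _ hx, hk0, E_neg_smul, one_smul] at h2
    exact neg_eq_zero.1 h2
  have e : ∀ ζ α x η β z, G t n ζ α x → G t n η β z → ζ ≠ -eps → f x z = 0 := by
    intro ζ α x η β z hx hz hne
    by_contra h0
    apply hne
    ext k
    have h1 := d _ _ _ _ _ _ hx hz k
    rw [hw0] at h1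
    simp only [map_zero, LinearMap.zero_apply, smul_zero] at h1
    have h2 := (smul_eq_zero.1 h1).resolve_right h0
    rw [LinearMap.add_apply] at h2
    rw [LinearMap.neg_apply]
    exact eq_neg_of_add_eq_zero_right h2
  have ee : ∀ ζ α x η β z, G t n ζ α x → G t n η β z → η ≠ -eps → f x z = 0 := by
    intro ζ α x η β z hx hz hne
    by_contra h0
    apply hne
    ext k
    have h1 := B _ _ _ _ _ _ hx hz k
    rw [e _ _ _ _ _ _ (G_cartan k) hz (by
      intro h; apply heps; rw [← neg_eq_zero, ← h])] at h1
    simp only [map_zero, LinearMap.zero_apply, smul_zero] at h1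
    have h2 := (smul_eq_zero.1 h1).resolve_right h0
    rw [LinearMap.add_apply] at h2
    rw [LinearMap.neg_apply]
    exact eq_neg_of_add_eq_zero_right h2
  have fin : ∀ ν, ∀ F ∈ M, ∀ ν₂, ∀ F₂ ∈ M,
      f (K n c * Wmap n (comp ν F)) (K n c * Wmap n (comp ν₂ F₂)) = 0 := by
    intro ν F hF ν₂ F₂ hF₂
    have hx := hD.G_comp hn ν F hF
    have hz := hD.G_comp hn ν₂ F₂ hF₂
    by_cases h1 : wtD t n ν = -eps
    swap
    · exact e _ _ _ _ _ _ hx hz h1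
    by_cases h2 : wtD t n ν₂ = -eps
    swap
    · exact ee _ _ _ _ _ _ hx hz h2
    by_contra hv0
    have hv := hw _ _ _ hx.2 _ hz.2
    rw [h1, h2] at hv
    have hv : f (K n c * Wmap n (comp ν F)) (K n c * Wmap n (comp ν₂ F₂)) ∈
        wtsp t n (t.algebra n) (-eps) := by
      have h3 : eps + -eps + -eps = -eps := by abel
      rwa [h3] at hv
    rw [h1] at hx
    generalize hxx : K n c * Wmap n (comp ν F) = x at *
    generalize K n c * Wmap n (comp ν₂ F₂) = z at *
    generalize ((∑ k, ν k : ℤ) : ZMod 2) = α at *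
    generalize ((∑ k, ν₂ k : ℤ) : ZMod 2) = β at *
    have c1 := hD.claim1 hn (-eps) (f x z) (by
      rintro i j hij ⟨k, hk, hk'⟩
      rw [LinearMap.neg_apply, neg_eq_zero] at hk
      have hu := hD.G_XP hn i j hij
      generalize wtD t n (wtv j {i}) = θ at *
      have hue := par_XP n i j
      have hcl := hD.close i j hij x hx.1.1
      generalize X n i * pd n j = u at *
      have hxu : G t n (-eps + θ) α (sbL n x u) := by
        rw [sbL_even_right _ _ _ hue]
        refine ⟨⟨hcl, ?_⟩, hcl, ?_⟩
        · have : x ∈ epar n α := hx.1.2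
          show _ ∈ epar n α
          rw [mem_epar] at this ⊢
          rw [mul_sub, ← mul_assoc, this, ← mul_assoc, hue, mul_assoc u, this, sub_mul, smul_sub,
            smul_mul_assoc, mul_smul_comm, mul_assoc, hue]
          simp only [mul_assoc]
        · intro h
          have q1 := hx.2.2 h
          have q2 := hu.2.2 h
          rw [sbL_even_left _ _ _ (cartan_even h), sub_eq_iff_eq_add] at q1 q2
          rw [sbL_even_left _ _ _ (cartan_even h), mul_sub, ← mul_assoc, q1, ← mul_assoc, q2,
            add_mul, add_mul, mul_assoc x, q2, mul_assoc u, q1, LinearMap.add_apply]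
          simp only [mul_add, add_smul, smul_sub, sub_mul, smul_mul_assoc, mul_smul_comm, mul_assoc]
          abel
      have h5 := hf.eq1 α 0 β x hx.1 u hu.1 z hz.1
      rw [e _ _ _ _ _ _ hxu hz (by
          intro h
          have := LinearMap.congr_fun h k
          simp only [LinearMap.add_apply, LinearMap.neg_apply, hk, neg_zero, zero_add] at this
          exact hk' this),
        e _ _ _ _ _ _ hu hz (by
          intro h
          have := LinearMap.congr_fun h k
          simp only [LinearMap.neg_apply, hk, neg_zero] at this
          exact hk' this), map_zero, smul_zero, zero_add, zero_mul, sgn_zero, one_smul,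
        sbL_even_right _ _ _ hue] at h5
      exact sub_eq_zero.1 h5.symm)
    have c2 := fun i j => hD.claim2 (-eps) (f x z) hv c1 i j hv0
    by_cases htW : t = CT.W
    · subst htW
      have hval : ∀ i, (ν i : ℂ) = - eps (hD.he i) := by
        intro i
        have := LinearMap.congr_fun h1 (hD.he i)
        rw [LinearMap.neg_apply, wtD_apply] at this
        rw [← this]
        have h6 : ∀ k, co n k (hD.he i : E n) = if i = k then 1 else 0 := fun k => co_XP n k i
        simp [h6]
      have hconst : ∀ i j, ν i = ν j := by
        intro i j
        have h7 := c2 i j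
        have h8 : hD.hh i j = hD.he i - hD.he j := rfl
        rw [h8, dual_sub, LinearMap.neg_apply, LinearMap.neg_apply, ← hval, ← hval, sub_eq_zero] at h7
        exact_mod_cast h7
      have hne : ∃ i, ν i ≠ 0 := by
        by_contra h9
        push Not at h9
        apply heps
        apply hD.claim3W
        intro i
        rw [← neg_eq_zero, ← hval, h9 i]; simp
      obtain ⟨i, hi⟩ := hne
      have hz0 : comp ν F = 0 := by
        funext m S
        unfold comp
        rw [if_neg]; rfl
        intro hS
        obtain ⟨a, _, ham, _⟩ := exists_two hn m m
        have g1 : wtv m S a = ν i := by rw [hS]; exact hconst a i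
        have g2 : wtv m S m = ν i := by rw [hS]; exact hconst m i
        unfold wtv at g1 g2
        simp only [ham, if_false, if_true] at g1 g2
        split_ifs at g1 g2 <;> omega
      rw [hz0, map_zero, mul_zero] at hxx
      apply hv0
      rw [← hxx]; simp
    · apply heps
      rw [← neg_eq_zero]
      exact hD.claim3 hn htW _ c2
  intro x hx y hy
  have s1 : ∀ ν, ∀ F ∈ M, f (K n c * Wmap n (comp ν F)) y = 0 := by
    intro ν F hF
    exact hD.induct (LinearMap.ker (f (K n c * Wmap n (comp ν F)))) (fun ν₂ F₂ hF₂ =>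
      fin ν F hF ν₂ F₂ hF₂) y hy
  exact hD.induct (LinearMap.ker (f.flip y)) (fun ν F hF => s1 ν F hF) x hx

/-- For `L = W(n)`, `S(n)` or `S̃(n)` (`n` even), `n ≥ 4`, a
super-biderivation `f ∈ BDer(L)_ε` of nonzero weight `ε ∈ H_L^*` is the zero map. -/
theorem superBider_nonzero_weight_vanishes (n : ℕ) (hn : 4 ≤ n) (t : CT)
    (ht : t = CT.W ∨ t = CT.S ∨ (t = CT.St ∧ Even n))
    (pf : ZMod 2) (f : E n →ₗ[ℂ] E n →ₗ[ℂ] E n)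
    (hf : IsSuperBider n (t.algebra n) pf f)
    (eps : Module.Dual ℂ (t.cartan n)) (heps : eps ≠ 0)
    (hw : t.HasWeight n f eps) :
    ∀ x ∈ t.algebra n, ∀ y ∈ t.algebra n, f x y = 0 := by
  obtain ⟨c, M, hD⟩ := desc n t ht
  exact main_aux n hn t c M hD pf f hf eps heps hw

end CartanSuper
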